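/- Define u₀ : ℝ → ℝ by u₀(y) = −y for y ≤ 0 and u₀(y) = −y^{3/2} for y ≥ 0. Then the proximal subdifferential of u₀ at 0 equals the half-open interval [−1, 0): a real number p belongs to D⁻_pr u₀(0) if and only if −1 ≤ p < 0. -/

import Mathlib

/-- The initial datum `u₀(y) = -y` for `y ≤ 0`, `u₀(y) = -y^(3/2)` for `y ≥ 0`. -/
noncomputable def u₀ : ℝ → ℝ :=
  fun y => if y ≤ 0 then -y else -(y ^ ((3 : ℝ) / 2))

/-- `p` is a proximal `K`-subgradient of `v : ℝ → ℝ` at `x₀`. -/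
def IsProxSubgrad (v : ℝ → ℝ) (x₀ p K : ℝ) : Prop :=
  ∃ r > 0, ∀ x : ℝ, |x - x₀| < r →
    v x₀ + p * (x - x₀) - K / 2 * (x - x₀) ^ 2 ≤ v x

lemma u₀_sq (s : ℝ) (hs : 0 < s) : u₀ (s ^ 2) = - s ^ 3 := by
  have h : ¬ (s ^ 2 ≤ 0) := not_le.mpr (by positivity)
  simp only [u₀, if_neg h]
  rw [← Real.rpow_natCast s 2, ← Real.rpow_mul hs.le, ← Real.rpow_natCast s 3]
  norm_num

lemma u₀_nonpos (y : ℝ) (h : y ≤ 0) : u₀ y = - y := by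
  simp only [u₀, if_pos h]

/-- The proximal subdifferential of `u₀` at `0` equals the half-open interval `[-1, 0)`. -/
theorem stmt17 (p : ℝ) :
    (∃ K > 0, IsProxSubgrad u₀ 0 p K) ↔ (-1 ≤ p ∧ p < 0) := by
  constructor
  · rintro ⟨K, hK, r, hr, H⟩
    have h0 : u₀ 0 = 0 := by rw [u₀_nonpos 0 le_rfl]; simp
    simp only [h0, sub_zero, zero_add] at H
    constructor
    · by_contra! hp
      have hq : 0 < (-1 - p) / K := div_pos (by linarith) hK
      obtain ⟨t, ht0, htr, htq⟩ : ∃ t, 0 < t ∧ t < r ∧ t ≤ (-1 - p) / K :=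
        ⟨min (r / 2) ((-1 - p) / K), by positivity,
          lt_of_le_of_lt (min_le_left _ _) (by linarith), min_le_right _ _⟩
      have h1 := H (-t) (by rw [abs_neg, abs_of_pos ht0]; exact htr)
      rw [u₀_nonpos (-t) (by linarith)] at h1
      rw [le_div_iff₀ hK] at htq
      have h2 : 0 < t * (-1 - p - K / 2 * t) := mul_pos ht0 (by linarith)
      nlinarith
    · by_contra! hp
      obtain ⟨t, ht0, htr, ht1, htq⟩ : ∃ t, 0 < t ∧ t < r ∧ t < 1 ∧ t ≤ 1 / K :=
        ⟨min (min (r / 2) (1 / 2)) (1 / K), by positivity,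
          lt_of_le_of_lt ((min_le_left _ _).trans (min_le_left _ _)) (by linarith),
          lt_of_le_of_lt ((min_le_left _ _).trans (min_le_right _ _)) (by norm_num),
          min_le_right _ _⟩
      have h1 := H (t ^ 2) (by rw [abs_of_pos (by positivity)]; nlinarith)
      rw [u₀_sq t ht0] at h1
      rw [le_div_iff₀ hK] at htq
      have h2 : 0 < t ^ 3 * (1 - K / 2 * t) := mul_pos (by positivity) (by linarith)
      have h3 : 0 ≤ p * t ^ 2 := by positivity
      nlinarith
  · rintro ⟨h1, h2⟩
    refine ⟨1, one_pos, p ^ 2, by nlinarith, ?_⟩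
    have h0 : u₀ 0 = 0 := by rw [u₀_nonpos 0 le_rfl]; simp
    intro x hx
    simp only [h0, sub_zero, zero_add] at hx ⊢
    rcases le_or_gt x 0 with h | h
    · rw [u₀_nonpos x h]
      nlinarith [mul_nonneg (by linarith : 0 ≤ p + 1) (by linarith : 0 ≤ -x), sq_nonneg x]
    · obtain ⟨s, hs, rfl⟩ : ∃ s, 0 < s ∧ x = s ^ 2 :=
        ⟨√x, Real.sqrt_pos.mpr h, (Real.sq_sqrt h.le).symm⟩
      rw [u₀_sq s hs]
      rw [abs_of_pos h] at hx
      have h3 : s < -p := by nlinarith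
      have h4 : 0 < s ^ 2 * (-p - s) := mul_pos h (by linarith)
      nlinarith [sq_nonneg (s ^ 2)]
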